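/- arXiv:2507.16433 — 2 statements merged into one kernel-verified Lean document; each statement's English description precedes it below -/
import Mathlib

section
/- Let p, T, K ≥ 1, let R be a p×T real matrix, let Q be a T×T orthogonal projection (Qᵀ = Q, Q² = Q) with tr(Q) = K, let λ ∈ ℝ, and let F be a T×K real matrix with FᵀF = T·I_K. Set B = T⁻¹RF, P_F = T⁻¹FFᵀ, and V = T⁻¹RᵀR − λT⁻¹(I_T − 2Q). Then the penalized objective satisfies the identity (1/T)‖R − BFᵀ‖_F² + (λ/T)‖P_F − Q‖_F² = (1/T)(tr(RᵀR) + λK − tr(FᵀVF)). -/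
open Matrix

/-- Squared Frobenius norm of a real matrix. -/
noncomputable def frobSq {m n : ℕ} (A : Matrix (Fin m) (Fin n) ℝ) : ℝ :=
  Matrix.trace (Aᵀ * A)

/-!
Since `B Fᵀ = R P_F` and `tr(Fᵀ V F) = tr(T V P_F)`, both sides depend on `F` only through the
orthogonal projection `P_F`. Expanding the squares and using `P_F² = P_F`, both become affine in
`P_F`: the summand `-λ I` of `T V` accounts for the term `λ tr P_F` of `λ‖P_F - Q‖²`, and the only
constant left over from the penalty is `λ‖Q‖²`, which is `λ tr Q = λ K` for a projection `Q`.
-/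

section CommRing

variable {α m n : Type*} [CommRing α] [Fintype m] [Fintype n]

theorem trace_transpose_mul_self_sub (A B : Matrix m n α) :
    trace ((A - B)ᵀ * (A - B)) = trace (Aᵀ * A) - 2 * trace (Aᵀ * B) + trace (Bᵀ * B) := by
  have hcross : trace (Bᵀ * A) = trace (Aᵀ * B) := by
    rw [← trace_transpose, transpose_mul, transpose_transpose]
  simp only [transpose_sub, Matrix.sub_mul, Matrix.mul_sub, trace_sub, hcross]
  ring

theorem trace_transpose_mul_self_sub_mul_projection (R : Matrix m n α) {P : Matrix n n α}
    (hsymm : P.IsSymm) (hidem : IsIdempotentElem P) :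
    trace ((R - R * P)ᵀ * (R - R * P)) = trace (Rᵀ * R) - trace (Rᵀ * R * P) := by
  have hfit : trace ((R * P)ᵀ * (R * P)) = trace (Rᵀ * R * P) :=
    calc trace ((R * P)ᵀ * (R * P))
        = trace (P * (Rᵀ * R * P)) := by simp only [transpose_mul, hsymm.eq, Matrix.mul_assoc]
      _ = trace (Rᵀ * R * (P * P)) := by rw [trace_mul_comm, Matrix.mul_assoc]
      _ = trace (Rᵀ * R * P) := by rw [hidem.eq]
  rw [trace_transpose_mul_self_sub, hfit, ← Matrix.mul_assoc]
  ring

theorem trace_transpose_mul_self_projection_sub {P : Matrix n n α}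
    (hsymm : P.IsSymm) (hidem : IsIdempotentElem P) (Q : Matrix n n α) :
    trace ((P - Q)ᵀ * (P - Q)) = trace P - 2 * trace (Q * P) + trace (Qᵀ * Q) := by
  rw [trace_transpose_mul_self_sub, hsymm.eq, hidem.eq, trace_mul_comm P Q]

theorem penalized_projection_identity [DecidableEq n] (R : Matrix m n α) {P : Matrix n n α}
    (hsymm : P.IsSymm) (hidem : IsIdempotentElem P) (Q : Matrix n n α) (lam : α) :
    trace ((R - R * P)ᵀ * (R - R * P)) + lam * trace ((P - Q)ᵀ * (P - Q)) =
      trace (Rᵀ * R) + lam * trace (Qᵀ * Q) -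
        trace ((Rᵀ * R - lam • (1 - (2 : α) • Q)) * P) := by
  rw [trace_transpose_mul_self_sub_mul_projection R hsymm hidem,
    trace_transpose_mul_self_projection_sub hsymm hidem]
  simp only [Matrix.sub_mul, Matrix.smul_mul, Matrix.one_mul, trace_sub, trace_smul, smul_eq_mul]
  ring

end CommRing

section Field

variable {𝕜 m n k : Type*} [Field 𝕜]

/-- The projection `P_F` onto the column space of a factor matrix `F` normalized by `Fᵀ F = c I`
(in the factor model, `c = T`). The normalization is not part of the definition. -/
def factorProjection [Fintype k] (c : 𝕜) (F : Matrix n k 𝕜) : Matrix n n 𝕜 :=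
  c⁻¹ • (F * Fᵀ)

/-- The matrix `V` of the factor model (with `c = T`), whose trace form `tr(Fᵀ V F)` carries the
dependence of the penalized objective on `F`. -/
def penalizedGram [Fintype m] [DecidableEq n] (c lam : 𝕜) (R : Matrix m n 𝕜) (Q : Matrix n n 𝕜) :
    Matrix n n 𝕜 :=
  c⁻¹ • (Rᵀ * R) - (lam * c⁻¹) • (1 - (2 : 𝕜) • Q)

theorem isSymm_factorProjection [Fintype k] (c : 𝕜) (F : Matrix n k 𝕜) :
    (factorProjection c F).IsSymm := by
  rw [IsSymm, factorProjection, transpose_smul, transpose_mul, transpose_transpose]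

theorem isIdempotentElem_factorProjection [Fintype n] [Fintype k] [DecidableEq k]
    {c : 𝕜} (hc : c ≠ 0) {F : Matrix n k 𝕜} (hF : Fᵀ * F = c • 1) :
    IsIdempotentElem (factorProjection c F) := by
  have hsq : F * Fᵀ * (F * Fᵀ) = c • (F * Fᵀ) := by
    rw [Matrix.mul_assoc, ← Matrix.mul_assoc Fᵀ, hF, Matrix.smul_mul, Matrix.one_mul,
      Matrix.mul_smul]
  rw [IsIdempotentElem, factorProjection, Matrix.smul_mul, Matrix.mul_smul, hsq,
    inv_smul_smul₀ hc]

theorem smul_mul_mul_transpose_eq_mul_factorProjection [Fintype n] [Fintype k] (c : 𝕜)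
    (R : Matrix m n 𝕜) (F : Matrix n k 𝕜) :
    c⁻¹ • (R * F) * Fᵀ = R * factorProjection c F := by
  rw [factorProjection, Matrix.smul_mul, Matrix.mul_smul, Matrix.mul_assoc]

theorem trace_transpose_mul_mul_eq_trace_smul_mul_factorProjection [Fintype n] [Fintype k]
    {c : 𝕜} (hc : c ≠ 0) (F : Matrix n k 𝕜) (V : Matrix n n 𝕜) :
    trace (Fᵀ * V * F) = trace (c • V * factorProjection c F) := by
  rw [trace_mul_cycle, trace_mul_comm, factorProjection, Matrix.smul_mul, Matrix.mul_smul,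
    smul_inv_smul₀ hc]

theorem smul_penalizedGram [Fintype m] [DecidableEq n] {c : 𝕜} (hc : c ≠ 0) (lam : 𝕜)
    (R : Matrix m n 𝕜) (Q : Matrix n n 𝕜) :
    c • penalizedGram c lam R Q = Rᵀ * R - lam • (1 - (2 : 𝕜) • Q) := by
  rw [penalizedGram, smul_sub, smul_inv_smul₀ hc, smul_smul, mul_left_comm, mul_inv_cancel₀ hc,
    mul_one]

theorem penalized_objective_identity_general [Fintype m] [Fintype n] [Fintype k] [DecidableEq n]
    [DecidableEq k] {c : 𝕜} (hc : c ≠ 0) (R : Matrix m n 𝕜) (Q : Matrix n n 𝕜) (lam : 𝕜)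
    {F : Matrix n k 𝕜} (hF : Fᵀ * F = c • 1) :
    1 / c * trace ((R - c⁻¹ • (R * F) * Fᵀ)ᵀ * (R - c⁻¹ • (R * F) * Fᵀ)) +
        lam / c * trace ((factorProjection c F - Q)ᵀ * (factorProjection c F - Q)) =
      1 / c * (trace (Rᵀ * R) + lam * trace (Qᵀ * Q) -
        trace (Fᵀ * penalizedGram c lam R Q * F)) := by
  rw [smul_mul_mul_transpose_eq_mul_factorProjection,
    trace_transpose_mul_mul_eq_trace_smul_mul_factorProjection hc,
    smul_penalizedGram hc, ← penalized_projection_identity R (isSymm_factorProjection c F)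
      (isIdempotentElem_factorProjection hc hF) Q lam]
  ring

end Field

/-- With `Q` a `T × T` orthogonal projection of trace `K`, `F` a `T × K`
factor matrix with `FᵀF = T·I`, `B = T⁻¹ R F`, `P_F = T⁻¹ F Fᵀ`, and
`V = T⁻¹ RᵀR − λ T⁻¹ (I − 2Q)`, the penalized objective satisfies
`(1/T)‖R − BFᵀ‖_F² + (λ/T)‖P_F − Q‖_F² = (1/T)(tr(RᵀR) + λK − tr(FᵀVF))`. -/
theorem penalized_objective_identity (p T K : ℕ) (hp : 1 ≤ p) (hT : 1 ≤ T) (hK : 1 ≤ K)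
    (R : Matrix (Fin p) (Fin T) ℝ)
    (Q : Matrix (Fin T) (Fin T) ℝ)
    (hQsym : Qᵀ = Q) (hQidem : Q * Q = Q) (hQtr : Matrix.trace Q = (K : ℝ))
    (lam : ℝ)
    (F : Matrix (Fin T) (Fin K) ℝ)
    (hF : Fᵀ * F = (T : ℝ) • (1 : Matrix (Fin K) (Fin K) ℝ))
    (B : Matrix (Fin p) (Fin K) ℝ) (hB : B = (T : ℝ)⁻¹ • (R * F))
    (PF : Matrix (Fin T) (Fin T) ℝ) (hPF : PF = (T : ℝ)⁻¹ • (F * Fᵀ))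
    (V : Matrix (Fin T) (Fin T) ℝ)
    (hV : V = (T : ℝ)⁻¹ • (Rᵀ * R) -
      (lam * (T : ℝ)⁻¹) • ((1 : Matrix (Fin T) (Fin T) ℝ) - (2 : ℝ) • Q)) :
    (1 / (T : ℝ)) * frobSq (R - B * Fᵀ) + (lam / (T : ℝ)) * frobSq (PF - Q) =
      (1 / (T : ℝ)) *
        (Matrix.trace (Rᵀ * R) + lam * (K : ℝ) - Matrix.trace (Fᵀ * V * F)) := by
  have hT0 : (T : ℝ) ≠ 0 := Nat.cast_ne_zero.mpr (Nat.one_le_iff_ne_zero.mp hT)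
  have hQnorm : trace (Qᵀ * Q) = (K : ℝ) := by rw [hQsym, hQidem, hQtr]
  subst hB hPF hV
  rw [← hQnorm]
  exact penalized_objective_identity_general hT0 R Q lam hF
end

section
/- Let p, T, K ≥ 1 with K ≤ T, let R be a p×T real matrix, let λ ≥ 0, and let Q be a T×T orthogonal projection (Qᵀ = Q, Q² = Q) with tr(Q) = K. Set V = T⁻¹RᵀR − λT⁻¹(I_T − 2Q). Then the minimum of the penalized objective (1/T)‖R − BFᵀ‖_F² + (λ/T)‖T⁻¹FFᵀ − Q‖_F² over all p×K matrices B and all T×K matrices F with FᵀF = T·I_K equals (1/T)tr(RᵀR) + λK/T − Σ_{i=1}^K θ_i(V), and it is attained at F̂ = √T·(matrix of orthonormal eigenvectors of V corresponding to its K largest eigenvalues) together with B̂ = T⁻¹RF̂. -/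
open Matrix

/-!
If `FᵀF = c • 1` with `c ≠ 0`, then `P = c⁻¹FFᵀ` is an orthogonal projection of trace `K`, so that
`‖P - Q‖² = ‖Q‖² + K - 2 tr(QP)`, while completing the square in `B` gives
`‖R - BFᵀ‖² = ‖R‖² - tr(RᵀRP) + c ‖B - c⁻¹RF‖²`. For `c = T` the objective is therefore a constant
minus `tr(VP)` plus `‖B - T⁻¹RF‖²`. The square vanishes at `B = T⁻¹RF`, and Ky Fan's principle says
that `tr(VP)` is at most the sum of the `K` largest eigenvalues of `V`, with equality when the
columns of `F` are corresponding eigenvectors.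
-/

theorem sum_mul_le_sum_of_forall_mem_forall_notMem_le {ι R : Type*} [Fintype ι] [CommRing R]
    [LinearOrder R] [IsStrictOrderedRing R] {s : Finset ι} {f w : ι → R}
    (hf : ∀ i ∈ s, ∀ j ∉ s, f j ≤ f i) (hw₀ : ∀ i, 0 ≤ w i) (hw₁ : ∀ i, w i ≤ 1)
    (hw : ∑ i, w i = s.card) :
    ∑ i, f i * w i ≤ ∑ i ∈ s, f i := by
  classical
  obtain ⟨c, hcs, hsc⟩ : ∃ c, (∀ i ∈ s, c ≤ f i) ∧ ∀ j ∉ s, f j ≤ c := by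
    rcases s.eq_empty_or_nonempty with rfl | hs
    · obtain ⟨c, hc⟩ := (Set.finite_range f).bddAbove
      exact ⟨c, by simp, fun j _ ↦ hc ⟨j, rfl⟩⟩
    · exact ⟨s.inf' hs f, fun i hi ↦ s.inf'_le f hi,
        fun j hj ↦ s.le_inf' hs f fun i hi ↦ hf i hi j hj⟩
  have shifted : ∑ i, (f i - c) * w i ≤ ∑ i, if i ∈ s then f i - c else 0 := by
    refine Finset.sum_le_sum fun i _ ↦ ?_
    split_ifs with hi
    · exact mul_le_of_le_one_right (sub_nonneg.2 (hcs i hi)) (hw₁ i)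
    · exact mul_nonpos_of_nonpos_of_nonneg (sub_nonpos.2 (hsc i hi)) (hw₀ i)
  simp only [sub_mul, Finset.sum_sub_distrib, ← Finset.mul_sum, hw, Finset.sum_ite_mem,
    Finset.univ_inter, Finset.sum_const, nsmul_eq_mul] at shifted
  linarith

section KyFan

open scoped ComplexOrder MatrixOrder

variable {n 𝕜 : Type*} [Fintype n] [DecidableEq n] [RCLike 𝕜]

theorem trace_mul_eq_sum_eigenvalues_mul {V : Matrix n n 𝕜} (hV : V.IsHermitian)
    (P : Matrix n n 𝕜) :
    (V * P).trace = ∑ i, (hV.eigenvalues i : 𝕜) *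
      ((hV.eigenvectorUnitary : Matrix n n 𝕜)ᴴ * P * hV.eigenvectorUnitary) i i := by
  conv_lhs => rw [hV.spectral_theorem, Unitary.conjStarAlgAut_apply]
  rw [Matrix.mul_assoc, Matrix.mul_assoc, Matrix.trace_mul_comm, Matrix.mul_assoc]
  simp only [trace, diag_apply, diagonal_mul, Function.comp_apply, star_eq_conjTranspose]

theorem re_trace_mul_le_sum_eigenvalues {V P : Matrix n n 𝕜} (hV : V.IsHermitian)
    {s : Finset n} (hs : ∀ i ∈ s, ∀ j ∉ s, hV.eigenvalues j ≤ hV.eigenvalues i)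
    (hP₀ : 0 ≤ P) (hP₁ : P ≤ 1) (hP : P.trace = s.card) :
    RCLike.re (V * P).trace ≤ ∑ i ∈ s, hV.eigenvalues i := by
  set U := (hV.eigenvectorUnitary : Matrix n n 𝕜)
  have hUU : Uᴴ * U = 1 := Unitary.coe_star_mul_self hV.eigenvectorUnitary
  have hUU' : U * Uᴴ = 1 := Unitary.coe_mul_star_self hV.eigenvectorUnitary
  have hdiag₀ (i : n) : 0 ≤ (Uᴴ * P * U) i i :=
    ((nonneg_iff_posSemidef.1 hP₀).conjTranspose_mul_mul_same U).diag_nonneg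
  have hdiag₁ (i : n) : (Uᴴ * P * U) i i ≤ 1 := by
    have := ((le_iff.1 hP₁).conjTranspose_mul_mul_same U).diag_nonneg (i := i)
    rwa [Matrix.mul_sub, Matrix.mul_one, Matrix.sub_mul, hUU, Matrix.sub_apply, one_apply_eq,
      sub_nonneg] at this
  have htrace : (Uᴴ * P * U).trace = s.card := by
    rw [trace_mul_cycle, hUU', Matrix.one_mul, hP]
  rw [trace_mul_eq_sum_eigenvalues_mul hV, map_sum]
  simp only [RCLike.re_ofReal_mul]
  refine sum_mul_le_sum_of_forall_mem_forall_notMem_le hs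
    (fun i ↦ (RCLike.nonneg_iff.1 (hdiag₀ i)).1)
    (fun i ↦ (RCLike.le_iff_re_im.1 (hdiag₁ i)).1.trans_eq RCLike.one_re) ?_
  rw [← map_sum, ← RCLike.natCast_re (K := 𝕜), ← htrace]
  rfl

end KyFan

section ScaledOrthonormal

variable {n κ : Type*} [Fintype n] [Fintype κ] [DecidableEq κ] {c : ℝ} {F : Matrix n κ ℝ}

theorem isStarProjection_inv_smul_mul_transpose (hF : Fᵀ * F = c • 1) (hc : c ≠ 0) :
    IsStarProjection (c⁻¹ • (F * Fᵀ)) where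
  isIdempotentElem := by
    rw [IsIdempotentElem, smul_mul_smul_comm, Matrix.mul_assoc, ← Matrix.mul_assoc Fᵀ, hF,
      Matrix.smul_mul, Matrix.one_mul, Matrix.mul_smul, smul_smul, inv_mul_cancel_right₀ hc]
  isSelfAdjoint := by
    rw [isSelfAdjoint_iff, star_eq_conjTranspose, conjTranspose_eq_transpose_of_trivial,
      transpose_smul, transpose_mul, transpose_transpose]

theorem trace_inv_smul_mul_transpose (hF : Fᵀ * F = c • 1) (hc : c ≠ 0) :
    (c⁻¹ • (F * Fᵀ)).trace = Fintype.card κ := by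
  rw [trace_smul, trace_mul_comm, hF, trace_smul, smul_smul, inv_mul_cancel₀ hc, one_smul,
    trace_one]

theorem trace_mul_inv_smul_mul_transpose_of_eigen {V : Matrix n n ℝ} {μ : κ → ℝ}
    (hF : Fᵀ * F = c • 1) (hc : c ≠ 0) (hVF : V * F = F * diagonal μ) :
    (V * (c⁻¹ • (F * Fᵀ))).trace = ∑ i, μ i := by
  rw [Matrix.mul_smul, ← Matrix.mul_assoc, hVF, trace_smul, trace_mul_cycle, hF, Matrix.smul_mul,
    Matrix.one_mul, trace_smul, smul_smul, inv_mul_cancel₀ hc, one_smul, trace_diagonal]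

theorem exists_scaled_orthonormal_eigenvectors [DecidableEq n] {V : Matrix n n ℝ}
    (hV : V.IsHermitian) {e : κ → n} (he : e.Injective) (hc : 0 ≤ c) :
    ∃ F : Matrix n κ ℝ, Fᵀ * F = c • 1 ∧ V * F = F * diagonal (hV.eigenvalues ∘ e) := by
  set U := (hV.eigenvectorUnitary : Matrix n n ℝ)
  have hUU : Uᵀ * U = 1 := by
    rw [← conjTranspose_eq_transpose_of_trivial]
    exact Unitary.coe_star_mul_self hV.eigenvectorUnitary
  have hVU : V * U = U * diagonal hV.eigenvalues := by
    ext i j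
    rw [mul_diagonal, mul_comm]
    exact congrFun (hV.mulVec_eigenvectorBasis j) i
  refine ⟨√c • U.submatrix id e, ?_, ?_⟩
  · calc (√c • U.submatrix id e)ᵀ * (√c • U.submatrix id e)
        = c • (Uᵀ * U).submatrix e e := by
          rw [transpose_smul, Matrix.smul_mul, Matrix.mul_smul, smul_smul,
            Real.mul_self_sqrt hc, transpose_submatrix,
            ← submatrix_mul _ _ _ _ _ Function.bijective_id]
      _ = c • 1 := by rw [hUU, submatrix_one e he]
  · rw [Matrix.mul_smul, Matrix.smul_mul]
    congr 1
    ext i j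
    simpa only [mul_diagonal] using! congrFun₂ hVU i (e j)

end ScaledOrthonormal

section Frobenius

variable {m n k : ℕ}

theorem frobSq_nonneg (A : Matrix (Fin m) (Fin n) ℝ) : 0 ≤ frobSq A := by
  simpa only [conjTranspose_eq_transpose_of_trivial] using!
    (posSemidef_conjTranspose_mul_self A).trace_nonneg

theorem frobSq_sub (A B : Matrix (Fin m) (Fin n) ℝ) :
    frobSq (A - B) = frobSq A - 2 * (Aᵀ * B).trace + frobSq B := by
  have hsymm : (Bᵀ * A).trace = (Aᵀ * B).trace := by
    rw [← trace_transpose, transpose_mul, transpose_transpose]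
  simp only [frobSq, transpose_sub, Matrix.sub_mul, Matrix.mul_sub, trace_sub, hsymm]
  ring

theorem frobSq_smul (c : ℝ) (A : Matrix (Fin m) (Fin n) ℝ) :
    frobSq (c • A) = c ^ 2 * frobSq A := by
  rw [frobSq, transpose_smul, Matrix.smul_mul, Matrix.mul_smul, smul_smul, trace_smul,
    smul_eq_mul, ← sq, frobSq]

variable {c : ℝ} {F : Matrix (Fin n) (Fin k) ℝ}

theorem frobSq_mul_transpose (hF : Fᵀ * F = c • 1) (B : Matrix (Fin m) (Fin k) ℝ) :
    frobSq (B * Fᵀ) = c * frobSq B := by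
  rw [frobSq, transpose_mul, transpose_transpose, ← Matrix.mul_assoc, trace_mul_comm,
    ← Matrix.mul_assoc, ← Matrix.mul_assoc, hF, Matrix.smul_mul, Matrix.one_mul, Matrix.smul_mul,
    trace_smul, smul_eq_mul, frobSq]

theorem frobSq_sub_mul_transpose (hF : Fᵀ * F = c • 1) (hc : c ≠ 0)
    (R : Matrix (Fin m) (Fin n) ℝ) (B : Matrix (Fin m) (Fin k) ℝ) :
    frobSq (R - B * Fᵀ) =
      frobSq R - c⁻¹ * frobSq (R * F) + c * frobSq (B - c⁻¹ • (R * F)) := by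
  have hcross : (Rᵀ * (B * Fᵀ)).trace = (Bᵀ * (R * F)).trace := by
    rw [← trace_transpose, transpose_mul, transpose_mul, transpose_transpose, transpose_transpose,
      Matrix.mul_assoc, trace_mul_comm, Matrix.mul_assoc]
  rw [frobSq_sub, frobSq_sub, frobSq_smul, frobSq_mul_transpose hF, hcross, Matrix.mul_smul,
    trace_smul, smul_eq_mul]
  field_simp
  ring

theorem frobSq_inv_smul_mul_transpose_sub (hF : Fᵀ * F = c • 1) (hc : c ≠ 0)
    (Q : Matrix (Fin n) (Fin n) ℝ) :
    frobSq (c⁻¹ • (F * Fᵀ) - Q) = frobSq Q + k - 2 * (Q * (c⁻¹ • (F * Fᵀ))).trace := by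
  have hP := isStarProjection_inv_smul_mul_transpose hF hc
  have hPt : (c⁻¹ • (F * Fᵀ))ᵀ = c⁻¹ • (F * Fᵀ) := by
    rw [← conjTranspose_eq_transpose_of_trivial]
    exact hP.isSelfAdjoint
  have hnorm : frobSq (c⁻¹ • (F * Fᵀ)) = k := by
    rw [frobSq, hPt, hP.isIdempotentElem.eq, trace_inv_smul_mul_transpose hF hc, Fintype.card_fin]
  rw [frobSq_sub, hnorm, hPt, trace_mul_comm]
  ring

theorem penalized_objective_eq (hF : Fᵀ * F = c • 1) (hc : c ≠ 0) (lam : ℝ)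
    (R : Matrix (Fin m) (Fin n) ℝ) (Q : Matrix (Fin n) (Fin n) ℝ)
    (B : Matrix (Fin m) (Fin k) ℝ) :
    (1 / c) * frobSq (R - B * Fᵀ) + (lam / c) * frobSq (c⁻¹ • (F * Fᵀ) - Q) =
      (1 / c) * frobSq R + lam * frobSq Q / c -
        ((c⁻¹ • (Rᵀ * R) - (lam * c⁻¹) • (1 - (2 : ℝ) • Q)) * (c⁻¹ • (F * Fᵀ))).trace +
        frobSq (B - c⁻¹ • (R * F)) := by
  have hRF : (Rᵀ * R * (c⁻¹ • (F * Fᵀ))).trace = c⁻¹ * frobSq (R * F) := by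
    rw [Matrix.mul_smul, trace_smul, smul_eq_mul, ← Matrix.mul_assoc, trace_mul_comm, frobSq,
      transpose_mul, Matrix.mul_assoc, Matrix.mul_assoc]
  rw [frobSq_sub_mul_transpose hF hc, frobSq_inv_smul_mul_transpose_sub hF hc]
  simp only [Matrix.sub_mul, Matrix.smul_mul, Matrix.one_mul, trace_sub, trace_smul, smul_eq_mul,
    hRF, trace_inv_smul_mul_transpose hF hc, Fintype.card_fin]
  field_simp
  ring

end Frobenius

open scoped MatrixOrder in
theorem trace_mul_inv_smul_mul_transpose_le_sum {T K : ℕ} (hKT : K ≤ T)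
    {V : Matrix (Fin T) (Fin T) ℝ} (hV : V.IsHermitian) {θ : Fin T → ℝ} (hθ : Antitone θ)
    {σ : Equiv.Perm (Fin T)} (hσ : hV.eigenvalues = θ ∘ σ) {c : ℝ} (hc : c ≠ 0)
    {F : Matrix (Fin T) (Fin K) ℝ} (hF : Fᵀ * F = c • 1) :
    (V * (c⁻¹ • (F * Fᵀ))).trace ≤ ∑ i : Fin K, θ (Fin.castLE hKT i) := by
  let s : Finset (Fin T) := Finset.univ.map ((Fin.castLEEmb hKT).trans σ.symm.toEmbedding)
  have mem_s (j : Fin T) : j ∈ s ↔ (σ j : ℕ) < K := by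
    simp only [s, Finset.mem_map, Finset.mem_univ, true_and, Function.Embedding.trans_apply,
      Equiv.coe_toEmbedding, Equiv.symm_apply_eq]
    exact ⟨by rintro ⟨i, hi⟩; simp [← hi], fun h ↦ ⟨⟨σ j, h⟩, rfl⟩⟩
  have hs : ∀ i ∈ s, ∀ j ∉ s, hV.eigenvalues j ≤ hV.eigenvalues i := by
    intro i hi j hj
    rw [mem_s] at hi hj
    rw [hσ]
    exact hθ (hi.le.trans (not_lt.1 hj))
  have hP := isStarProjection_inv_smul_mul_transpose hF hc
  have hcard : (c⁻¹ • (F * Fᵀ)).trace = s.card := by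
    rw [trace_inv_smul_mul_transpose hF hc, Finset.card_map, Finset.card_univ]
  calc (V * (c⁻¹ • (F * Fᵀ))).trace ≤ ∑ i ∈ s, hV.eigenvalues i :=
        re_trace_mul_le_sum_eigenvalues hV hs hP.nonneg hP.le_one hcard
    _ = ∑ i : Fin K, θ (Fin.castLE hKT i) := by simp [s, hσ]

theorem penalized_objective_minimum_general (p T K : ℕ) (hT : 1 ≤ T) (hKT : K ≤ T)
    (R : Matrix (Fin p) (Fin T) ℝ) (lam : ℝ) (Q V : Matrix (Fin T) (Fin T) ℝ)
    (hV : V = (T : ℝ)⁻¹ • (Rᵀ * R) -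
      (lam * (T : ℝ)⁻¹) • ((1 : Matrix (Fin T) (Fin T) ℝ) - (2 : ℝ) • Q))
    (hVH : V.IsHermitian)
    (θ : Fin T → ℝ) (hθ : Antitone θ)
    (hperm : ∃ σ : Equiv.Perm (Fin T), hVH.eigenvalues = θ ∘ σ) :
    (∀ (B : Matrix (Fin p) (Fin K) ℝ) (F : Matrix (Fin T) (Fin K) ℝ),
      Fᵀ * F = (T : ℝ) • (1 : Matrix (Fin K) (Fin K) ℝ) →
      (1 / (T : ℝ)) * frobSq R + lam * frobSq Q / (T : ℝ) -
          ∑ i : Fin K, θ (Fin.castLE hKT i) ≤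
        (1 / (T : ℝ)) * frobSq (R - B * Fᵀ) +
          (lam / (T : ℝ)) * frobSq ((T : ℝ)⁻¹ • (F * Fᵀ) - Q)) ∧
    (∃ F : Matrix (Fin T) (Fin K) ℝ,
      Fᵀ * F = (T : ℝ) • (1 : Matrix (Fin K) (Fin K) ℝ) ∧
      (∀ i : Fin K, V *ᵥ (fun t => F t i) = θ (Fin.castLE hKT i) • (fun t => F t i)) ∧
      (1 / (T : ℝ)) * frobSq (R - ((T : ℝ)⁻¹ • (R * F)) * Fᵀ) +
          (lam / (T : ℝ)) * frobSq ((T : ℝ)⁻¹ • (F * Fᵀ) - Q) =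
        (1 / (T : ℝ)) * frobSq R + lam * frobSq Q / (T : ℝ) -
          ∑ i : Fin K, θ (Fin.castLE hKT i)) := by
  have hT₀ : (T : ℝ) ≠ 0 := Nat.cast_ne_zero.2 (Nat.one_le_iff_ne_zero.1 hT)
  obtain ⟨σ, hσ⟩ := hperm
  constructor
  · intro B F hF
    rw [penalized_objective_eq hF hT₀, ← hV]
    linarith [trace_mul_inv_smul_mul_transpose_le_sum hKT hVH hθ hσ hT₀ hF,
      frobSq_nonneg (B - (T : ℝ)⁻¹ • (R * F))]
  · obtain ⟨F, hF, hVF⟩ := exists_scaled_orthonormal_eigenvectors hVH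
      (σ.symm.injective.comp (Fin.castLE_injective hKT)) T.cast_nonneg
    have heig : hVH.eigenvalues ∘ (σ.symm ∘ Fin.castLE hKT) = θ ∘ Fin.castLE hKT := by
      simp only [hσ, Function.comp_def, Equiv.apply_symm_apply]
    rw [heig] at hVF
    refine ⟨F, hF, fun i ↦ ?_, ?_⟩
    · ext t
      exact (congrFun₂ hVF t i).trans ((mul_diagonal _ _ _ _).trans (mul_comm _ _))
    · rw [penalized_objective_eq hF hT₀, ← hV,
        trace_mul_inv_smul_mul_transpose_of_eigen hF hT₀ hVF]
      simp [frobSq]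

/-- With `Q` a `T × T` orthogonal projection of trace `K`, `λ ≥ 0`,
`V = T⁻¹RᵀR − λT⁻¹(I − 2Q)`, and `θ` an antitone enumeration of the eigenvalues of `V`,
the minimum of `(1/T)‖R − BFᵀ‖_F² + (λ/T)‖T⁻¹FFᵀ − Q‖_F²` over all `B` and all `F` with
`FᵀF = T·I` equals `(1/T)tr(RᵀR) + λK/T − Σ_{i<K} θ i`, and it is attained at
`F̂ = √T ·(orthonormal eigenvectors of the K largest eigenvalues of V)` together with
`B̂ = T⁻¹RF̂`. -/
theorem penalized_objective_minimum (p T K : ℕ) (hp : 1 ≤ p) (hT : 1 ≤ T)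
    (hK : 1 ≤ K) (hKT : K ≤ T)
    (R : Matrix (Fin p) (Fin T) ℝ)
    (lam : ℝ) (hlam : 0 ≤ lam)
    (Q : Matrix (Fin T) (Fin T) ℝ)
    (hQsym : Qᵀ = Q) (hQidem : Q * Q = Q) (hQtr : Matrix.trace Q = (K : ℝ))
    (V : Matrix (Fin T) (Fin T) ℝ)
    (hV : V = (T : ℝ)⁻¹ • (Rᵀ * R) -
      (lam * (T : ℝ)⁻¹) • ((1 : Matrix (Fin T) (Fin T) ℝ) - (2 : ℝ) • Q))
    (hVH : V.IsHermitian)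
    (θ : Fin T → ℝ) (hθ : Antitone θ)
    (hperm : ∃ σ : Equiv.Perm (Fin T), hVH.eigenvalues = θ ∘ σ) :
    (∀ (B : Matrix (Fin p) (Fin K) ℝ) (F : Matrix (Fin T) (Fin K) ℝ),
      Fᵀ * F = (T : ℝ) • (1 : Matrix (Fin K) (Fin K) ℝ) →
      (1 / (T : ℝ)) * Matrix.trace (Rᵀ * R) + lam * (K : ℝ) / (T : ℝ) -
          ∑ i : Fin K, θ (Fin.castLE hKT i) ≤
        (1 / (T : ℝ)) * frobSq (R - B * Fᵀ) +
          (lam / (T : ℝ)) * frobSq ((T : ℝ)⁻¹ • (F * Fᵀ) - Q)) ∧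
    (∃ F : Matrix (Fin T) (Fin K) ℝ,
      Fᵀ * F = (T : ℝ) • (1 : Matrix (Fin K) (Fin K) ℝ) ∧
      (∀ i : Fin K, V *ᵥ (fun t => F t i) = θ (Fin.castLE hKT i) • (fun t => F t i)) ∧
      (1 / (T : ℝ)) * frobSq (R - ((T : ℝ)⁻¹ • (R * F)) * Fᵀ) +
          (lam / (T : ℝ)) * frobSq ((T : ℝ)⁻¹ • (F * Fᵀ) - Q) =
        (1 / (T : ℝ)) * Matrix.trace (Rᵀ * R) + lam * (K : ℝ) / (T : ℝ) -
          ∑ i : Fin K, θ (Fin.castLE hKT i)) := by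
  have hQ : frobSq Q = K := by rw [frobSq, hQsym, hQidem, hQtr]
  exact hQ ▸ penalized_objective_minimum_general p T K hT hKT R lam Q V hV hVH θ hθ hperm
end
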